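/- Let S1, S2, U, X, Y1, Y2 be finitely-valued random variables such that (U,X) is independent of (S1,S2) and (Y1,Y2) is conditionally independent of (U,S1,S2) given X. Apply the Theorem-2 conditions to the source pair S̃1 = (S1,S2), S̃2 = S2 with the choice U0 = (U,S2), U1 = X, U2 = constant. Then the resulting five inequalities, H(S̃1) < I(U0,U1,S̃1;Y1) − I(U0,U1;S̃2|S̃1); H(S̃2) < I(U0,U2,S̃2;Y2) − I(U0,U2;S̃1|S̃2); H(S̃1,S̃2) < I(U0,U1,S̃1;Y1) + I(U2,S̃2;Y2|U0) − I(U1,S̃1;U2,S̃2|U0); H(S̃1,S̃2) < I(U1,S̃1;Y1|U0) + I(U0,U2,S̃2;Y2) − I(U1,S̃1;U2,S̃2|U0); H(S̃1,S̃2) < I(U0,U1,S̃1;Y1) + I(U0,U2,S̃2;Y2) − I(U1,S̃1;U2,S̃2|U0) − I(S̃1,S̃2;U0), hold simultaneously if and only if the three inequalities H(S2) < I(U;Y2), H(S1,S2) < I(U;Y2) + I(X;Y1|U), and H(S1,S2) < I(X;Y1) hold. -/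

import Mathlib

/-!
Write `S = (S1,S2)`. Since `(U,X)` is independent of `S` and `(Y1,Y2) — X — (U,S)` is a Markov
chain, the whole tuple `(Y1,Y2,U,X)` is independent of `S` (`indep_of_markov`). Hence every joint
entropy in the five inequalities splits into an entropy of some of `Y1,Y2,U,X` plus `H(S)` or
`H(S2)` (`Indep.H_split`). The Markov chain `Y1 — X — U` moreover gives `I(U,X;Y1) = I(X;Y1)`
(`CondIndep.H_add`). After these substitutions the first and third inequalities both read
`H(S) < I(X;Y1)`, the second `H(S2) < I(U;Y2)`, the fourth `H(S) < I(U;Y2) + I(X;Y1|U)`, and the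
fifth, `H(S) + H(S2) < I(X;Y1) + I(U;Y2)`, is the sum of the first two.

The entropy identities rest on `H(X) = -E[log P(X)]` (`H_eq_sum`), which makes them pointwise
identities between logarithms at sample points of positive mass.
-/

open Real Filter

attribute [local instance] Classical.propDecidable

noncomputable section

namespace CSBC

/-- A probability mass function on a finite type. -/
def IsPMF {Ω : Type*} [Fintype Ω] (p : Ω → ℝ) : Prop :=
  (∀ ω, 0 ≤ p ω) ∧ ∑ ω, p ω = 1

/-- Distribution (pushforward pmf) of a random variable `X` under pmf `p`. -/
def dist {Ω A : Type*} [Fintype Ω] [Fintype A] (p : Ω → ℝ) (X : Ω → A) : A → ℝ :=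
  fun a => ∑ ω, if X ω = a then p ω else 0

/-- Shannon entropy of the random variable `X` under the pmf `p`. -/
def H {Ω A : Type*} [Fintype Ω] [Fintype A] (p : Ω → ℝ) (X : Ω → A) : ℝ :=
  -∑ a, dist p X a * Real.log (dist p X a)

/-- Mutual information `I(X;Y)` under the pmf `p`. -/
def I2 {Ω A B : Type*} [Fintype Ω] [Fintype A] [Fintype B]
    (p : Ω → ℝ) (X : Ω → A) (Y : Ω → B) : ℝ :=
  H p X + H p Y - H p (fun ω => (X ω, Y ω))

/-- Conditional mutual information `I(X;Y|Z)` under the pmf `p`. -/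
def CI {Ω A B C : Type*} [Fintype Ω] [Fintype A] [Fintype B] [Fintype C]
    (p : Ω → ℝ) (X : Ω → A) (Y : Ω → B) (Z : Ω → C) : ℝ :=
  H p (fun ω => (X ω, Z ω)) + H p (fun ω => (Y ω, Z ω))
    - H p (fun ω => (X ω, Y ω, Z ω)) - H p Z

end CSBC

open CSBC
namespace CSBC

/-- The five inequalities of Theorem 2 (Minero–Kim form) for sources `S1, S2`,
auxiliary triple `V0, V1, V2` and channel outputs `Y1, Y2`. -/
def MKfive {Ω A1 A2 B0 B1 B2 C1 C2 : Type*} [Fintype Ω] [Fintype A1] [Fintype A2]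
    [Fintype B0] [Fintype B1] [Fintype B2] [Fintype C1] [Fintype C2]
    (p : Ω → ℝ) (S1 : Ω → A1) (S2 : Ω → A2) (V0 : Ω → B0) (V1 : Ω → B1) (V2 : Ω → B2)
    (Y1 : Ω → C1) (Y2 : Ω → C2) : Prop :=
  H p S1 < I2 p (fun ω => (V0 ω, V1 ω, S1 ω)) Y1
      - CI p (fun ω => (V0 ω, V1 ω)) S2 S1 ∧
  H p S2 < I2 p (fun ω => (V0 ω, V2 ω, S2 ω)) Y2
      - CI p (fun ω => (V0 ω, V2 ω)) S1 S2 ∧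
  H p (fun ω => (S1 ω, S2 ω)) < I2 p (fun ω => (V0 ω, V1 ω, S1 ω)) Y1
      + CI p (fun ω => (V2 ω, S2 ω)) Y2 V0
      - CI p (fun ω => (V1 ω, S1 ω)) (fun ω => (V2 ω, S2 ω)) V0 ∧
  H p (fun ω => (S1 ω, S2 ω)) < CI p (fun ω => (V1 ω, S1 ω)) Y1 V0
      + I2 p (fun ω => (V0 ω, V2 ω, S2 ω)) Y2
      - CI p (fun ω => (V1 ω, S1 ω)) (fun ω => (V2 ω, S2 ω)) V0 ∧
  H p (fun ω => (S1 ω, S2 ω)) < I2 p (fun ω => (V0 ω, V1 ω, S1 ω)) Y1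
      + I2 p (fun ω => (V0 ω, V2 ω, S2 ω)) Y2
      - CI p (fun ω => (V1 ω, S1 ω)) (fun ω => (V2 ω, S2 ω)) V0
      - I2 p (fun ω => (S1 ω, S2 ω)) V0

end CSBC
namespace CSBC

section Helpers

variable {Ω A B C D F : Type*} [Fintype Ω] [Fintype A] [Fintype B] [Fintype C]
  [Fintype D] [Fintype F]

/-- Independence of `X` and `Y`, as factorization of the joint distribution. -/
def Indep (p : Ω → ℝ) (X : Ω → A) (Y : Ω → B) : Prop :=
  ∀ a b, CSBC.dist p (fun ω => (X ω, Y ω)) (a, b) = CSBC.dist p X a * CSBC.dist p Y b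

/-- Conditional independence of `X` and `Y` given `Z`, in the division-free form
`P(x,y,z) P(z) = P(x,z) P(y,z)`. -/
def CondIndep (p : Ω → ℝ) (X : Ω → A) (Y : Ω → B) (Z : Ω → C) : Prop :=
  ∀ a b c, CSBC.dist p (fun ω => (X ω, Y ω, Z ω)) (a, b, c) * CSBC.dist p Z c
    = CSBC.dist p (fun ω => (X ω, Z ω)) (a, c) * CSBC.dist p (fun ω => (Y ω, Z ω)) (b, c)

/-- Entropy as an expectation over the sample space, `H(X) = -E[log P(X)]`. -/
lemma H_eq_sum (p : Ω → ℝ) (X : Ω → A) :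
    H p X = -∑ ω, p ω * Real.log (CSBC.dist p X (X ω)) := by
  unfold H
  congr 1
  have h : ∀ a, CSBC.dist p X a * Real.log (CSBC.dist p X a)
      = ∑ ω, if X ω = a then p ω * Real.log (CSBC.dist p X (X ω)) else 0 := by
    intro a
    conv_lhs => enter [1]; unfold CSBC.dist
    rw [Finset.sum_mul]
    refine Finset.sum_congr rfl fun ω _ => ?_
    split_ifs with h
    · rw [h]
    · simp
  rw [Finset.sum_congr rfl fun a _ => h a, Finset.sum_comm]
  simp

/-- Entropy depends only on the partition of the sample space induced by the variable. -/
lemma H_congr (p : Ω → ℝ) (X : Ω → A) (Y : Ω → B)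
    (h : ∀ ω ω', X ω' = X ω ↔ Y ω' = Y ω) : H p X = H p Y := by
  rw [H_eq_sum, H_eq_sum]
  congr 1
  refine Finset.sum_congr rfl fun ω _ => ?_
  have : CSBC.dist p X (X ω) = CSBC.dist p Y (Y ω) := by
    unfold CSBC.dist
    refine Finset.sum_congr rfl fun ω' _ => ?_
    simp only [h ω ω']
  rw [this]

lemma dist_nonneg' {p : Ω → ℝ} (hp : IsPMF p) (X : Ω → A) (a : A) : 0 ≤ CSBC.dist p X a :=
  Finset.sum_nonneg fun ω _ => by split_ifs; exacts [hp.1 ω, le_rfl]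

lemma dist_pos {p : Ω → ℝ} (hp : IsPMF p) (X : Ω → A) {ω : Ω} (hω : p ω ≠ 0) :
    0 < CSBC.dist p X (X ω) := by
  refine lt_of_lt_of_le (lt_of_le_of_ne (hp.1 ω) hω.symm) ?_
  have := Finset.single_le_sum (f := fun ω' => if X ω' = X ω then p ω' else 0)
    (fun ω' _ => by split_ifs; exacts [hp.1 ω', le_rfl]) (Finset.mem_univ ω)
  simpa [CSBC.dist] using this

lemma dist_congr (p : Ω → ℝ) {X : Ω → A} {Y : Ω → B} {a : A} {b : B}
    (h : ∀ ω, X ω = a ↔ Y ω = b) : CSBC.dist p X a = CSBC.dist p Y b := by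
  unfold CSBC.dist
  refine Finset.sum_congr rfl fun ω _ => ?_
  simp only [h ω]

lemma dist_mono {p : Ω → ℝ} (hp : IsPMF p) {X : Ω → A} {Y : Ω → B} {a : A} {b : B}
    (h : ∀ ω, X ω = a → Y ω = b) : CSBC.dist p X a ≤ CSBC.dist p Y b := by
  unfold CSBC.dist
  refine Finset.sum_le_sum fun ω _ => ?_
  by_cases hX : X ω = a
  · simp [hX, h ω hX]
  · rw [if_neg hX]
    split_ifs
    exacts [hp.1 ω, le_rfl]

/-- Marginalization: pushing forward the first component along `f` sums over the fibre. -/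
lemma dist_map_fst (p : Ω → ℝ) (X : Ω → A) (Z : Ω → C) (f : A → B) (b : B) (c : C) :
    CSBC.dist p (fun ω => (f (X ω), Z ω)) (b, c)
      = ∑ a, if f a = b then CSBC.dist p (fun ω => (X ω, Z ω)) (a, c) else 0 := by
  have h : ∀ a, (if f a = b then CSBC.dist p (fun ω => (X ω, Z ω)) (a, c) else 0)
      = ∑ ω, if X ω = a then (if (f (X ω), Z ω) = (b, c) then p ω else 0) else 0 := by
    intro a
    unfold CSBC.dist
    by_cases hf : f a = b
    · rw [if_pos hf]
      refine Finset.sum_congr rfl fun ω _ => ?_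
      by_cases hX : X ω = a <;> simp [hX, hf]
    · rw [if_neg hf]
      refine (Finset.sum_eq_zero fun ω _ => ?_).symm
      by_cases hX : X ω = a <;> simp [hX, hf]
  rw [Finset.sum_congr rfl fun a _ => h a, Finset.sum_comm]
  simp [CSBC.dist]

lemma dist_map (p : Ω → ℝ) (X : Ω → A) (f : A → B) (b : B) :
    CSBC.dist p (fun ω => f (X ω)) b = ∑ a, if f a = b then CSBC.dist p X a else 0 := by
  rw [dist_congr p (Y := fun ω => (f (X ω), ())) (b := (b, ())) (by simp), dist_map_fst]
  refine Finset.sum_congr rfl fun a _ => ?_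
  rw [dist_congr p (X := fun ω => (X ω, ())) (Y := X) (b := a) (by simp)]

lemma Indep.symm {p : Ω → ℝ} {X : Ω → A} {Y : Ω → B} (h : Indep p X Y) : Indep p Y X := by
  intro b a
  rw [mul_comm, ← h a b]
  exact dist_congr p fun ω => by simp only [Prod.mk.injEq]; tauto

lemma Indep.map_left {p : Ω → ℝ} {X : Ω → A} {Y : Ω → B} (h : Indep p X Y) (f : A → D) :
    Indep p (fun ω => f (X ω)) Y := by
  intro a' b
  rw [dist_map_fst, dist_map, Finset.sum_mul]
  refine Finset.sum_congr rfl fun a _ => ?_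
  rw [h, ite_mul, zero_mul]

lemma Indep.map {p : Ω → ℝ} {X : Ω → A} {Y : Ω → B} (h : Indep p X Y)
    (f : A → D) (g : B → F) : Indep p (fun ω => f (X ω)) (fun ω => g (Y ω)) :=
  ((h.map_left f).symm.map_left g).symm

lemma CondIndep.symm {p : Ω → ℝ} {X : Ω → A} {Y : Ω → B} {Z : Ω → C}
    (h : CondIndep p X Y Z) : CondIndep p Y X Z := by
  intro b a c
  rw [mul_comm (CSBC.dist p (fun ω => (Y ω, Z ω)) (b, c)), ← h a b c]
  congr 1
  exact dist_congr p fun ω => by simp only [Prod.mk.injEq]; tauto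

lemma CondIndep.map_left {p : Ω → ℝ} {X : Ω → A} {Y : Ω → B} {Z : Ω → C}
    (h : CondIndep p X Y Z) (f : A → D) : CondIndep p (fun ω => f (X ω)) Y Z := by
  intro a' b c
  rw [dist_map_fst p X (fun ω => (Y ω, Z ω)), dist_map_fst, Finset.sum_mul, Finset.sum_mul]
  refine Finset.sum_congr rfl fun a _ => ?_
  rw [ite_mul, zero_mul, h, ite_mul, zero_mul]

lemma CondIndep.map {p : Ω → ℝ} {X : Ω → A} {Y : Ω → B} {Z : Ω → C} (h : CondIndep p X Y Z)
    (f : A → D) (g : B → F) : CondIndep p (fun ω => f (X ω)) (fun ω => g (Y ω)) Z :=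
  ((h.map_left f).symm.map_left g).symm

/-- Entropy is additive over independent pairs. -/
lemma Indep.H_prod {p : Ω → ℝ} (hp : IsPMF p) {X : Ω → A} {Y : Ω → B} (h : Indep p X Y) :
    H p (fun ω => (X ω, Y ω)) = H p X + H p Y := by
  rw [H_eq_sum, H_eq_sum, H_eq_sum, ← neg_add, ← Finset.sum_add_distrib]
  congr 1
  refine Finset.sum_congr rfl fun ω _ => ?_
  by_cases hω : p ω = 0
  · simp [hω]
  · rw [h, Real.log_mul (dist_pos hp X hω).ne' (dist_pos hp Y hω).ne', mul_add]

/-- Conditional independence as vanishing of `I(X;Y|Z)`. -/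
lemma CondIndep.H_add {p : Ω → ℝ} (hp : IsPMF p) {X : Ω → A} {Y : Ω → B} {Z : Ω → C}
    (h : CondIndep p X Y Z) :
    H p (fun ω => (X ω, Y ω, Z ω)) + H p Z
      = H p (fun ω => (X ω, Z ω)) + H p (fun ω => (Y ω, Z ω)) := by
  simp only [H_eq_sum, ← neg_add, ← Finset.sum_add_distrib]
  congr 1
  refine Finset.sum_congr rfl fun ω _ => ?_
  by_cases hω : p ω = 0
  · simp [hω]
  · rw [← mul_add, ← mul_add, ← Real.log_mul, ← Real.log_mul, h]
    exacts [(dist_pos hp _ hω).ne', (dist_pos hp _ hω).ne', (dist_pos hp _ hω).ne',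
      (dist_pos hp _ hω).ne']

/-- If `W` carries the same information as the pair `(f(X), g(Y))` and `X`, `Y` are
independent, then `H(W) = H(f(X)) + H(g(Y))`. -/
lemma Indep.H_split {p : Ω → ℝ} (hp : IsPMF p) {X : Ω → A} {Y : Ω → B} (h : Indep p X Y)
    (f : A → D) (g : B → F) (W : Ω → C)
    (hW : ∀ ω ω', W ω' = W ω ↔ f (X ω') = f (X ω) ∧ g (Y ω') = g (Y ω)) :
    H p W = H p (fun ω => f (X ω)) + H p (fun ω => g (Y ω)) := by
  rw [← (h.map f g).H_prod hp]
  exact H_congr p _ _ fun ω ω' => by rw [hW, Prod.mk.injEq]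

/-- If `(U,X)` is independent of `S` and `Y — X — (U,S)` is a Markov chain, then
`(Y,U,X)` is independent of `S`. -/
lemma indep_of_markov {p : Ω → ℝ} (hp : IsPMF p) {Y : Ω → A} {U : Ω → B} {X : Ω → C}
    {S : Ω → D} (hI : Indep p (fun ω => (U ω, X ω)) S)
    (hM : CondIndep p Y (fun ω => (U ω, S ω)) X) :
    Indep p (fun ω => (Y ω, U ω, X ω)) S := by
  rintro ⟨y, u, x⟩ s
  have e₁ : CSBC.dist p (fun ω => ((Y ω, U ω, X ω), S ω)) ((y, u, x), s)
      = CSBC.dist p (fun ω => (Y ω, (U ω, S ω), X ω)) (y, (u, s), x) :=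
    dist_congr p fun ω => by simp only [Prod.mk.injEq]; tauto
  have e₂ : CSBC.dist p (fun ω => ((U ω, S ω), X ω)) ((u, s), x)
      = CSBC.dist p (fun ω => ((U ω, X ω), S ω)) ((u, x), s) :=
    dist_congr p fun ω => by simp only [Prod.mk.injEq]; tauto
  have h₁ := hM y (u, s) x
  have h₂ := hM.map id Prod.fst y u x
  rw [← e₁, e₂, hI] at h₁
  simp only [id] at h₂
  by_cases hx : CSBC.dist p X x = 0
  -- The event `X = x` is null, so the joint probabilities on both sides vanish.
  · have z₁ : CSBC.dist p (fun ω => ((Y ω, U ω, X ω), S ω)) ((y, u, x), s) = 0 :=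
      le_antisymm (hx ▸ dist_mono hp fun ω => by simp only [Prod.mk.injEq]; tauto)
        (dist_nonneg' hp _ _)
    have z₂ : CSBC.dist p (fun ω => (Y ω, U ω, X ω)) (y, u, x) = 0 :=
      le_antisymm (hx ▸ dist_mono hp fun ω => by simp only [Prod.mk.injEq]; tauto)
        (dist_nonneg' hp _ _)
    rw [z₁, z₂, zero_mul]
  · refine mul_right_cancel₀ hx ?_
    rw [h₁]
    linear_combination (-CSBC.dist p S s) * h₂

end Helpers

end CSBC

/-- specialization to degraded source sets.  With
`S̃1 = (S1,S2)`, `S̃2 = S2`, `U0 = (U,S2)`, `U1 = X`, `U2 = const`, where `(U,X)`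
is independent of `(S1,S2)` and `(Y1,Y2)` is conditionally independent of
`(U,S1,S2)` given `X`, the five Theorem-2 inequalities hold iff the three
inequalities `H(S2) < I(U;Y2)`, `H(S1,S2) < I(U;Y2) + I(X;Y1|U)`, and
`H(S1,S2) < I(X;Y1)` hold. -/
theorem degraded_source_sets_specialization
    {Ω A1 A2 BU E C1 C2 : Type*}
    [Fintype Ω] [Fintype A1] [Fintype A2] [Fintype BU] [Fintype E] [Fintype C1]
    [Fintype C2]
    (p : Ω → ℝ) (hp : IsPMF p)
    (S1 : Ω → A1) (S2 : Ω → A2) (U : Ω → BU) (X : Ω → E)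
    (Y1 : Ω → C1) (Y2 : Ω → C2)
    (hindep : ∀ (a : BU × E) (b : A1 × A2),
      dist p (fun ω => ((U ω, X ω), S1 ω, S2 ω)) (a, b)
        = dist p (fun ω => (U ω, X ω)) a * dist p (fun ω => (S1 ω, S2 ω)) b)
    (hcondindep : ∀ (y : C1 × C2) (t : BU × A1 × A2) (x : E),
      dist p (fun ω => ((Y1 ω, Y2 ω), (U ω, S1 ω, S2 ω), X ω)) (y, t, x) * dist p X x
        = dist p (fun ω => ((Y1 ω, Y2 ω), X ω)) (y, x) *
          dist p (fun ω => ((U ω, S1 ω, S2 ω), X ω)) (t, x)) :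
    MKfive p (fun ω => (S1 ω, S2 ω)) S2 (fun ω => (U ω, S2 ω)) X
        (fun _ => (() : Unit)) Y1 Y2 ↔
      (H p S2 < I2 p U Y2 ∧
       H p (fun ω => (S1 ω, S2 ω)) < I2 p U Y2 + CI p X Y1 U ∧
       H p (fun ω => (S1 ω, S2 ω)) < I2 p X Y1) := by
  have hI : Indep p (fun ω => ((Y1 ω, Y2 ω), U ω, X ω)) (fun ω => (S1 ω, S2 ω)) :=
    indep_of_markov hp hindep hcondindep
  have hM : CondIndep p Y1 U X := CondIndep.map (p := p) hcondindep Prod.fst Prod.fst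
  have hUX := hM.H_add hp
  -- Each joint entropy in the five inequalities, split by independence of `(Y1,Y2,U,X)` and `S`.
  have t1 : H p (fun ω => ((U ω, S2 ω), X ω, (S1 ω, S2 ω)))
      = H p (fun ω => (U ω, X ω)) + H p (fun ω => (S1 ω, S2 ω)) :=
    hI.H_split hp (fun t => (t.2.1, t.2.2)) id _
      fun ω ω' => by simp only [Prod.mk.injEq, id]; tauto
  have t2 : H p (fun ω => (((U ω, S2 ω), X ω, (S1 ω, S2 ω)), Y1 ω))
      = H p (fun ω => (Y1 ω, U ω, X ω)) + H p (fun ω => (S1 ω, S2 ω)) :=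
    hI.H_split hp (fun t => (t.1.1, t.2.1, t.2.2)) id _
      fun ω ω' => by simp only [Prod.mk.injEq, id]; tauto
  have t3 : H p (fun ω => (((U ω, S2 ω), X ω), (S1 ω, S2 ω)))
      = H p (fun ω => (U ω, X ω)) + H p (fun ω => (S1 ω, S2 ω)) :=
    hI.H_split hp (fun t => (t.2.1, t.2.2)) id _
      fun ω ω' => by simp only [Prod.mk.injEq, id]; tauto
  have t4 : H p (fun ω => (S2 ω, (S1 ω, S2 ω))) = H p (fun ω => (S1 ω, S2 ω)) :=
    H_congr p _ _ fun ω ω' => by simp only [Prod.mk.injEq]; tauto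
  have t5 : H p (fun ω => (((U ω, S2 ω), X ω), S2 ω, (S1 ω, S2 ω)))
      = H p (fun ω => (U ω, X ω)) + H p (fun ω => (S1 ω, S2 ω)) :=
    hI.H_split hp (fun t => (t.2.1, t.2.2)) id _
      fun ω ω' => by simp only [Prod.mk.injEq, id]; tauto
  have t6 : H p (fun ω => ((U ω, S2 ω), (() : Unit), S2 ω))
      = H p U + H p S2 :=
    hI.H_split hp (fun t => t.2.1) Prod.snd _
      fun ω ω' => by simp only [Prod.mk.injEq]; tauto
  have t7 : H p (fun ω => (((U ω, S2 ω), (() : Unit), S2 ω), Y2 ω))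
      = H p (fun ω => (U ω, Y2 ω)) + H p S2 :=
    hI.H_split hp (fun t => (t.2.1, t.1.2)) Prod.snd _
      fun ω ω' => by simp only [Prod.mk.injEq]; tauto
  have t8 : H p (fun ω => (((U ω, S2 ω), (() : Unit)), S2 ω))
      = H p U + H p S2 :=
    hI.H_split hp (fun t => t.2.1) Prod.snd _
      fun ω ω' => by simp only [Prod.mk.injEq]; tauto
  have t9 : H p (fun ω => ((S1 ω, S2 ω), S2 ω)) = H p (fun ω => (S1 ω, S2 ω)) :=
    H_congr p _ _ fun ω ω' => by simp only [Prod.mk.injEq]; tauto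
  have t10 : H p (fun ω => (((U ω, S2 ω), (() : Unit)), (S1 ω, S2 ω), S2 ω))
      = H p U + H p (fun ω => (S1 ω, S2 ω)) :=
    hI.H_split hp (fun t => t.2.1) id _
      fun ω ω' => by simp only [Prod.mk.injEq, id]; tauto
  have t11 : H p (fun ω => (((() : Unit), S2 ω), U ω, S2 ω))
      = H p U + H p S2 :=
    hI.H_split hp (fun t => t.2.1) Prod.snd _
      fun ω ω' => by simp only [Prod.mk.injEq]; tauto
  have t12 : H p (fun ω => (Y2 ω, U ω, S2 ω))
      = H p (fun ω => (U ω, Y2 ω)) + H p S2 :=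
    hI.H_split hp (fun t => (t.2.1, t.1.2)) Prod.snd _
      fun ω ω' => by simp only [Prod.mk.injEq]; tauto
  have t13 : H p (fun ω => (((() : Unit), S2 ω), Y2 ω, U ω, S2 ω))
      = H p (fun ω => (U ω, Y2 ω)) + H p S2 :=
    hI.H_split hp (fun t => (t.2.1, t.1.2)) Prod.snd _
      fun ω ω' => by simp only [Prod.mk.injEq]; tauto
  have t14 : H p (fun ω => (U ω, S2 ω))
      = H p U + H p S2 :=
    hI.H_split hp (fun t => t.2.1) Prod.snd _
      fun ω ω' => by simp only [Prod.mk.injEq]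
  have t15 : H p (fun ω => ((X ω, (S1 ω, S2 ω)), U ω, S2 ω))
      = H p (fun ω => (U ω, X ω)) + H p (fun ω => (S1 ω, S2 ω)) :=
    hI.H_split hp (fun t => (t.2.1, t.2.2)) id _
      fun ω ω' => by simp only [Prod.mk.injEq, id]; tauto
  have t16 : H p (fun ω => ((X ω, (S1 ω, S2 ω)), ((() : Unit), S2 ω), U ω, S2 ω))
      = H p (fun ω => (U ω, X ω)) + H p (fun ω => (S1 ω, S2 ω)) :=
    hI.H_split hp (fun t => (t.2.1, t.2.2)) id _
      fun ω ω' => by simp only [Prod.mk.injEq, id]; tauto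
  have t17 : H p (fun ω => (Y1 ω, U ω, S2 ω))
      = H p (fun ω => (Y1 ω, U ω)) + H p S2 :=
    hI.H_split hp (fun t => (t.1.1, t.2.1)) Prod.snd _
      fun ω ω' => by simp only [Prod.mk.injEq]; tauto
  have t18 : H p (fun ω => ((X ω, (S1 ω, S2 ω)), Y1 ω, U ω, S2 ω))
      = H p (fun ω => (Y1 ω, U ω, X ω)) + H p (fun ω => (S1 ω, S2 ω)) :=
    hI.H_split hp (fun t => (t.1.1, t.2.1, t.2.2)) id _
      fun ω ω' => by simp only [Prod.mk.injEq, id]; tauto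
  have t19 : H p (fun ω => (((S1 ω, S2 ω), S2 ω), U ω, S2 ω))
      = H p U + H p (fun ω => (S1 ω, S2 ω)) :=
    hI.H_split hp (fun t => t.2.1) id _
      fun ω ω' => by simp only [Prod.mk.injEq, id]; tauto
  have r1 : H p (fun ω => (Y1 ω, X ω)) = H p (fun ω => (X ω, Y1 ω)) :=
    H_congr p _ _ fun ω ω' => by simp only [Prod.mk.injEq]; tauto
  have r2 : H p (fun ω => (X ω, U ω)) = H p (fun ω => (U ω, X ω)) :=
    H_congr p _ _ fun ω ω' => by simp only [Prod.mk.injEq]; tauto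
  have r3 : H p (fun ω => (X ω, Y1 ω, U ω)) = H p (fun ω => (Y1 ω, U ω, X ω)) :=
    H_congr p _ _ fun ω ω' => by simp only [Prod.mk.injEq]; tauto
  unfold MKfive I2 CI
  rw [t1, t2, t3, t4, t5, t6, t7, t8, t9, t10, t11, t12, t13, t14, t15, t16, t17, t18, t19, r2, r3]
  constructor
  · rintro ⟨h1, h2, h3, h4, h5⟩
    refine ⟨?_, ?_, ?_⟩ <;> linarith
  · rintro ⟨h1, h2, h3⟩
    refine ⟨?_, ?_, ?_, ?_, ?_⟩ <;> linarith
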